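/- Let Γ be an artin algebra, S a set of finitely generated Γ-modules, and X a resolving subcategory of Γ-mod contained in filt(S), the class of modules admitting a finite filtration with factors in S. Then X is contravariantly finite in filt(S) if and only if every module S ∈ S has a right X-approximation. -/

import Mathlib

/-!
Modules with a right `𝒳`-approximation are closed under extensions. Given `0 → A → B → C → 0`,
choose a *right minimal* approximation `f : X_A ⟶ A`, an approximation `c : X_C ⟶ C`, and a short
exact sequence `0 → K → P → X_C → 0` in `𝒳` with `P` projective. Lifting `P → X_C → C` to `B`
gives a map `K ⟶ A`, which factors through `f`; the pushout along `K ⟶ X_A` is an extension `Y` of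
`X_C` by `X_A` that maps to `B`. For `X' ⟶ B` with `X' ∈ 𝒳`, the induced `X' ⟶ C` factors through
`X_C`, and the only obstruction to factoring `X' ⟶ B` through `Y` is an extension `Z` of `X'` by
`X_A` together with a map `g : Z ⟶ A` extending `f`. Since `Z ∈ 𝒳`, the map `g` factors through
`f`, and right minimality of `f` turns this factorization into a splitting of `Z`. Right minimal
approximations are found by Fitting's lemma.
-/

open CategoryTheory Limits Opposite

/-- The Ext group `Ext^n(X, Y)` in the category of `Γ`-modules. -/
noncomputable abbrev extGrp (Γ : Type) [Ring Γ] (n : ℕ) (X Y : ModuleCat Γ) : ModuleCat ℤ :=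
  ((Ext ℤ (ModuleCat Γ) n).obj (op X)).obj Y

/-- The class of finitely generated `Γ`-modules. -/
def fgMod (Γ : Type) [Ring Γ] : Set (ModuleCat Γ) := {M | Module.Finite Γ M}

/-- A resolving subcategory of the category of finitely generated `Γ`-modules:
it consists of finitely generated modules, is closed under isomorphisms, contains all
(finitely generated) projective modules, and is closed under extensions, direct summands
and kernels of epimorphisms. -/
structure IsResolving (Γ : Type) [Ring Γ] (𝒳 : Set (ModuleCat Γ)) : Prop where
  subset_fg : 𝒳 ⊆ fgMod Γ
  iso_closed : ∀ M N : ModuleCat Γ, Nonempty (M ≅ N) → M ∈ 𝒳 → N ∈ 𝒳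
  proj_mem : ∀ M : ModuleCat Γ, M ∈ fgMod Γ → Projective M → M ∈ 𝒳
  ext_closed : ∀ S : ShortComplex (ModuleCat Γ), S.ShortExact →
    S.X₁ ∈ 𝒳 → S.X₃ ∈ 𝒳 → S.X₂ ∈ 𝒳
  summand_closed : ∀ M N : ModuleCat Γ, (M ⊞ N) ∈ 𝒳 → M ∈ 𝒳
  ker_epi_closed : ∀ S : ShortComplex (ModuleCat Γ), S.ShortExact →
    S.X₂ ∈ 𝒳 → S.X₃ ∈ 𝒳 → S.X₁ ∈ 𝒳

/-- A coresolving subcategory: consists of finitely generated modules, closed under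
isomorphisms, contains all (finitely generated) injective modules, and is closed under
extensions, direct summands and cokernels of monomorphisms. -/
structure IsCoresolving (Γ : Type) [Ring Γ] (𝒴 : Set (ModuleCat Γ)) : Prop where
  subset_fg : 𝒴 ⊆ fgMod Γ
  iso_closed : ∀ M N : ModuleCat Γ, Nonempty (M ≅ N) → M ∈ 𝒴 → N ∈ 𝒴
  inj_mem : ∀ M : ModuleCat Γ, M ∈ fgMod Γ → Injective M → M ∈ 𝒴
  ext_closed : ∀ S : ShortComplex (ModuleCat Γ), S.ShortExact →
    S.X₁ ∈ 𝒴 → S.X₃ ∈ 𝒴 → S.X₂ ∈ 𝒴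
  summand_closed : ∀ M N : ModuleCat Γ, (M ⊞ N) ∈ 𝒴 → M ∈ 𝒴
  coker_mono_closed : ∀ S : ShortComplex (ModuleCat Γ), S.ShortExact →
    S.X₁ ∈ 𝒴 → S.X₂ ∈ 𝒴 → S.X₃ ∈ 𝒴

/-- The right perpendicular category `𝒳^⊥ = ∩_{i ≥ 1} ker Ext^i(𝒳, −)`
inside the finitely generated modules. -/
def rightPerp (Γ : Type) [Ring Γ] (𝒳 : Set (ModuleCat Γ)) : Set (ModuleCat Γ) :=
  {M | M ∈ fgMod Γ ∧ ∀ X ∈ 𝒳, ∀ i : ℕ, 1 ≤ i → Subsingleton (extGrp Γ i X M)}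

/-- `f : C ⟶ M` is a right `𝒞`-approximation of `M`. -/
def IsRightApprox {𝒜 : Type*} [Category 𝒜] (𝒞 : Set 𝒜) {C M : 𝒜} (f : C ⟶ M) : Prop :=
  C ∈ 𝒞 ∧ ∀ C' ∈ 𝒞, ∀ g : C' ⟶ M, ∃ h : C' ⟶ C, h ≫ f = g

/-- `𝒞` is a contravariantly finite subcategory of `𝒟`. -/
def ContravariantlyFiniteIn {𝒜 : Type*} [Category 𝒜] (𝒞 𝒟 : Set 𝒜) : Prop :=
  ∀ M ∈ 𝒟, ∃ (C : 𝒜) (f : C ⟶ M), IsRightApprox 𝒞 f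

/-- `filt(𝒮)`: the modules admitting a finite filtration with factors in `𝒮`; equivalently,
the smallest class containing `𝒮` and the zero modules which is closed under extensions. -/
inductive Filt (Γ : Type) [Ring Γ] (𝒮 : Set (ModuleCat Γ)) : ModuleCat Γ → Prop
  | of {M : ModuleCat Γ} (h : M ∈ 𝒮) : Filt Γ 𝒮 M
  | zero {M : ModuleCat Γ} (h : Limits.IsZero M) : Filt Γ 𝒮 M
  | ext (S : ShortComplex (ModuleCat Γ)) (hS : S.ShortExact)
      (h1 : Filt Γ 𝒮 S.X₁) (h3 : Filt Γ 𝒮 S.X₃) : Filt Γ 𝒮 S.X₂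

section Approximations

variable {𝒜 : Type*} [Category 𝒜] {𝒞 : Set 𝒜}

/-- A morphism `f : X ⟶ M` is right minimal if every endomorphism of `X` over `M` is an
automorphism. A right `𝒞`-approximation with this property is a direct summand of every other one,
which is what makes extensions of approximations split in `IsRightApprox.exists_retraction`. -/
def IsRightMinimal {X M : 𝒜} (f : X ⟶ M) : Prop :=
  ∀ φ : X ⟶ X, φ ≫ f = f → IsIso φ

theorem IsRightApprox.of_comp {X Y M : 𝒜} {r : X ⟶ Y} {s : Y ⟶ M}
    (h : IsRightApprox 𝒞 (r ≫ s)) (hY : Y ∈ 𝒞) : IsRightApprox 𝒞 s := by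
  refine ⟨hY, fun C' hC' g => ?_⟩
  obtain ⟨k, hk⟩ := h.2 C' hC' g
  exact ⟨k ≫ r, by rw [Category.assoc, hk]⟩

theorem IsRightApprox.exists_retraction {X M Z : 𝒜} {f : X ⟶ M} (hf : IsRightApprox 𝒞 f)
    (hmin : IsRightMinimal f) (hZ : Z ∈ 𝒞) {i : X ⟶ Z} {g : Z ⟶ M} (hig : i ≫ g = f) :
    ∃ r : Z ⟶ X, i ≫ r = 𝟙 X ∧ r ≫ f = g := by
  obtain ⟨h, hh⟩ := hf.2 Z hZ g
  have hφ : (i ≫ h) ≫ f = f := by rw [Category.assoc, hh, hig]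
  have := hmin _ hφ
  refine ⟨h ≫ inv (i ≫ h), by rw [← Category.assoc, IsIso.hom_inv_id], ?_⟩
  rw [Category.assoc, (IsIso.inv_comp_eq (i ≫ h)).mpr hφ.symm, hh]

theorem isRightApprox_id {M : 𝒜} (hM : M ∈ 𝒞) : IsRightApprox 𝒞 (𝟙 M) :=
  ⟨hM, fun _ _ g => ⟨g, Category.comp_id g⟩⟩

end Approximations

section Abelian

variable {𝒜 : Type*} [Category 𝒜] [Abelian 𝒜]

theorem shortExact_of_isPullback {S : ShortComplex 𝒜} (hS : S.ShortExact) {X Z : 𝒜}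
    {v : X ⟶ S.X₃} {z : Z ⟶ S.X₂} {q : Z ⟶ X} (sq : IsPullback z q S.g v)
    {i : S.X₁ ⟶ Z} (hiz : i ≫ z = S.f) (hiq : i ≫ q = 0) :
    (ShortComplex.mk i q hiq).ShortExact := by
  have := hS.mono_f
  have := hS.epi_g
  have hi : Mono i := mono_of_mono_fac hiz
  have hq : Epi q := Abelian.epi_snd_of_isLimit _ _ sq.isLimit
  refine .mk' (ShortComplex.exact_of_f_is_kernel _ ?_) hi hq
  refine KernelFork.IsLimit.ofι' _ _ fun k hk => ?_
  have hkz : (k ≫ z) ≫ S.g = 0 := by rw [Category.assoc, sq.w, reassoc_of% hk, zero_comp]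
  refine ⟨hS.exact.lift (k ≫ z) hkz, sq.hom_ext ?_ ?_⟩
  · rw [Category.assoc, hiz, hS.exact.lift_f]
  · rw [Category.assoc, hiq, comp_zero, hk]

theorem shortExact_of_isPushout {S : ShortComplex 𝒜} (hS : S.ShortExact) {X Y : 𝒜}
    {a : S.X₁ ⟶ X} {y : S.X₂ ⟶ Y} {j : X ⟶ Y} (sq : IsPushout S.f a y j)
    {p : Y ⟶ S.X₃} (hyp : y ≫ p = S.g) (hjp : j ≫ p = 0) :
    (ShortComplex.mk j p hjp).ShortExact :=
  (shortExact_of_isPullback hS.op sq.op.flip (i := p.op) (congrArg Quiver.Hom.op hyp)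
    (congrArg Quiver.Hom.op hjp)).unop

/-- The obstruction to lifting `c` to a morphism of short exact sequences extending `f` is the
class of the extension induced by `Q.X₁ ⟶ S.X₁`, so it vanishes when that map factors through
`f`. -/
theorem exists_shortExact_hom_of_projective {Q S : ShortComplex 𝒜} (hQ : Q.ShortExact)
    [Projective Q.X₂] (hS : S.ShortExact) {X₁ : 𝒜} (f : X₁ ⟶ S.X₁)
    (hf : ∀ g : Q.X₁ ⟶ S.X₁, ∃ h : Q.X₁ ⟶ X₁, h ≫ f = g) (c : Q.X₃ ⟶ S.X₃) :
    ∃ (Y : 𝒜) (j : X₁ ⟶ Y) (p : Y ⟶ Q.X₃) (w : j ≫ p = 0) (φ : ShortComplex.mk j p w ⟶ S),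
      (ShortComplex.mk j p w).ShortExact ∧ φ.τ₁ = f ∧ φ.τ₃ = c := by
  have := hS.mono_f
  have := hS.epi_g
  let b : Q.X₂ ⟶ S.X₂ := Projective.factorThru (Q.g ≫ c) S.g
  have hb : b ≫ S.g = Q.g ≫ c := Projective.factorThru_comp _ _
  have hQb : (Q.f ≫ b) ≫ S.g = 0 := by rw [Category.assoc, hb, Q.zero_assoc, zero_comp]
  obtain ⟨a, ha⟩ := hf (hS.exact.lift (Q.f ≫ b) hQb)
  have hab : Q.f ≫ b = a ≫ f ≫ S.f := by rw [reassoc_of% ha, hS.exact.lift_f]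
  let p : pushout Q.f a ⟶ Q.X₃ := pushout.desc Q.g 0 (by simp)
  let y : pushout Q.f a ⟶ S.X₂ := pushout.desc b (f ≫ S.f) hab
  have hp : pushout.inl Q.f a ≫ p = Q.g := pushout.inl_desc _ _ _
  have hy : pushout.inl Q.f a ≫ y = b := pushout.inl_desc _ _ _
  have hjp : pushout.inr Q.f a ≫ p = 0 := pushout.inr_desc _ _ _
  have hjy : pushout.inr Q.f a ≫ y = f ≫ S.f := pushout.inr_desc _ _ _
  have hyp : y ≫ S.g = p ≫ c := by
    apply pushout.hom_ext
    · rw [reassoc_of% hy, reassoc_of% hp, hb]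
    · rw [reassoc_of% hjy, reassoc_of% hjp, S.zero, comp_zero, zero_comp]
  exact ⟨_, _, p, hjp, ⟨f, y, c, hjy.symm, hyp⟩,
    shortExact_of_isPushout hQ (IsPushout.of_hasPushout Q.f a) hp hjp, rfl, rfl⟩

variable {𝒞 : Set 𝒜}

theorem isRightApprox_τ₂_of_isRightMinimal_τ₁
    (h𝒞 : ObjectProperty.IsClosedUnderExtensions (· ∈ 𝒞)) {T S : ShortComplex 𝒜}
    (hT : T.ShortExact) (hS : S.ShortExact) (φ : T ⟶ S) (h₁ : IsRightApprox 𝒞 φ.τ₁)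
    (hmin : IsRightMinimal φ.τ₁) (h₃ : IsRightApprox 𝒞 φ.τ₃) : IsRightApprox 𝒞 φ.τ₂ := by
  have := hS.mono_f
  refine ⟨h𝒞.prop_X₂_of_shortExact hT h₁.1 h₃.1, fun X' hX' u => ?_⟩
  obtain ⟨v, hv⟩ := h₃.2 X' hX' (u ≫ S.g)
  let z : pullback T.g v ⟶ T.X₂ := pullback.fst T.g v
  let q : pullback T.g v ⟶ X' := pullback.snd T.g v
  let i : T.X₁ ⟶ pullback T.g v := pullback.lift T.f 0 (by simp)
  have hiz : i ≫ z = T.f := pullback.lift_fst _ _ _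
  have hiq : i ≫ q = 0 := pullback.lift_snd _ _ _
  have hZ : (ShortComplex.mk i q hiq).ShortExact :=
    shortExact_of_isPullback hT (IsPullback.of_hasPullback T.g v) hiz hiq
  have hd : (z ≫ φ.τ₂ - q ≫ u) ≫ S.g = 0 := by
    have hzq : z ≫ T.g = q ≫ v := pullback.condition
    rw [Preadditive.sub_comp, Category.assoc, Category.assoc, φ.comm₂₃, reassoc_of% hzq, hv,
      sub_self]
  obtain ⟨g, hg⟩ := hS.exact.lift' _ hd
  have hig : i ≫ g = φ.τ₁ := by
    rw [← cancel_mono S.f, Category.assoc, hg, Preadditive.comp_sub, reassoc_of% hiz,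
      reassoc_of% hiq, zero_comp, sub_zero, φ.comm₁₂]
  obtain ⟨r, hir, hrg⟩ :=
    h₁.exists_retraction hmin (h𝒞.prop_X₂_of_shortExact hZ h₁.1 hX') hig
  have hzr : i ≫ (z - r ≫ T.f) = 0 := by
    rw [Preadditive.comp_sub, hiz, reassoc_of% hir, sub_self]
  have hq : Epi q := hZ.epi_g
  obtain ⟨s, hs : q ≫ s = z - r ≫ T.f⟩ := CokernelCofork.IsColimit.desc' hZ.gIsCokernel _ hzr
  refine ⟨s, ?_⟩
  rw [← cancel_epi q, reassoc_of% hs, Preadditive.sub_comp, Category.assoc, ← φ.comm₁₂,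
    reassoc_of% hrg, hg, sub_sub_cancel]

theorem exists_isRightApprox_of_shortExact
    (h𝒞 : ObjectProperty.IsClosedUnderExtensions (· ∈ 𝒞)) {Q S : ShortComplex 𝒜}
    (hQ : Q.ShortExact) [Projective Q.X₂] (hQ₁ : Q.X₁ ∈ 𝒞) (hS : S.ShortExact)
    {X₁ : 𝒜} {f : X₁ ⟶ S.X₁} (hf : IsRightApprox 𝒞 f) (hmin : IsRightMinimal f)
    {c : Q.X₃ ⟶ S.X₃} (hc : IsRightApprox 𝒞 c) :
    ∃ (Y : 𝒜) (y : Y ⟶ S.X₂), IsRightApprox 𝒞 y := by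
  obtain ⟨Y, j, p, w, φ, hT, rfl, rfl⟩ :=
    exists_shortExact_hom_of_projective hQ hS f (hf.2 Q.X₁ hQ₁) c
  exact ⟨Y, φ.τ₂, isRightApprox_τ₂_of_isRightMinimal_τ₁ h𝒞 hT hS φ hf hmin hc⟩

theorem nonempty_iso_biprod_of_retract {N X : 𝒜} (ρ : Retract N X) :
    ∃ K : 𝒜, Nonempty (X ≅ N ⊞ K) :=
  ⟨cokernel ρ.i, ⟨(ShortComplex.Splitting.ofExactOfRetraction
    (ShortComplex.mk ρ.i (cokernel.π ρ.i) (cokernel.condition ρ.i))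
    (ShortComplex.exact_cokernel ρ.i) ρ.r ρ.retract
    (inferInstanceAs (Epi (cokernel.π ρ.i)))).isoBinaryBiproduct⟩⟩

end Abelian

section FiniteLength

universe u v

variable {Γ : Type u} [Ring Γ] {X M : ModuleCat.{v} Γ}

theorem exists_retract_length_lt_of_not_isRightMinimal [IsNoetherian Γ X] [IsArtinian Γ X]
    {f : X ⟶ M} (hf : ¬ IsRightMinimal f) :
    ∃ (N : ModuleCat.{v} Γ) (ρ : Retract N X),
      Module.length Γ N < Module.length Γ X ∧ ρ.r ≫ ρ.i ≫ f = f := by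
  simp only [IsRightMinimal, not_forall] at hf
  obtain ⟨φ, hφf, hφ⟩ := hf
  obtain ⟨n, hcompl, hn⟩ := (φ.hom.eventually_isCompl_ker_pow_range_pow.and
    (Filter.eventually_ne_atTop 0)).exists
  let N : Submodule Γ X := LinearMap.range (φ.hom ^ n)
  let K : Submodule Γ X := LinearMap.ker (φ.hom ^ n)
  have hNK : IsCompl N K := hcompl.symm
  have hN : N ≠ ⊤ := fun htop => hφ <| (ConcreteCategory.isIso_iff_bijective φ).mpr <|
    IsNoetherian.bijective_of_surjective_endomorphism φ.hom <|
      Module.End.surjective_of_iterate_surjective hn (LinearMap.range_eq_top.mp htop)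
  have hfpow (x : X) : f.hom ((φ.hom ^ n) x) = f.hom x := by
    have hsemi : Function.Semiconj f.hom φ.hom id := fun x => congr($hφf x)
    simpa [Module.End.pow_apply] using hsemi.iterate_right n x
  have hfK {x : X} (hx : x ∈ K) : f.hom x = 0 := by
    rw [← hfpow, LinearMap.mem_ker.mp hx, map_zero]
  refine ⟨ModuleCat.of Γ N,
    ⟨ModuleCat.ofHom N.subtype, ModuleCat.ofHom (N.projectionOnto K hNK), ?_⟩,
    Submodule.length_lt hN, ?_⟩
  · ext x
    simp
  · ext x
    have hx : f.hom (x - N.projection K hNK x) = 0 := hfK (Submodule.sub_projection_mem hNK x)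
    exact (sub_eq_zero.mp ((map_sub f.hom _ _).symm.trans hx)).symm

theorem IsRightApprox.exists_isRightMinimal {𝒞 : Set (ModuleCat.{v} Γ)}
    (h𝒞 : ObjectProperty.IsStableUnderRetracts (· ∈ 𝒞)) {f : X ⟶ M} (hf : IsRightApprox 𝒞 f)
    [IsNoetherian Γ X] [IsArtinian Γ X] :
    ∃ (Y : ModuleCat.{v} Γ) (g : Y ⟶ M), IsRightApprox 𝒞 g ∧ IsRightMinimal g := by
  induction hl : Module.length Γ X using WellFoundedLT.induction generalizing X with
  | ind l ih =>
    by_cases hmin : IsRightMinimal f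
    · exact ⟨X, f, hf, hmin⟩
    · obtain ⟨N, ρ, hlt, hρ⟩ := exists_retract_length_lt_of_not_isRightMinimal hmin
      have hN : IsRightApprox 𝒞 (ρ.i ≫ f) :=
        .of_comp (r := ρ.r) (by rwa [hρ]) (h𝒞.of_retract ρ hf.1)
      have hi : Function.Injective ρ.i.hom := (ModuleCat.mono_iff_injective ρ.i).mp inferInstance
      have := isNoetherian_of_injective ρ.i.hom hi
      have := isArtinian_of_injective ρ.i.hom hi
      exact ih _ (hl ▸ hlt) hN rfl

end FiniteLength

theorem exists_finite_projective_epi.{u, v} {Γ : Type u} [Ring Γ] [Small.{v} Γ]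
    (M : ModuleCat.{v} Γ) [Module.Finite Γ M] :
    ∃ (P : ModuleCat.{v} Γ) (q : P ⟶ M), Module.Finite Γ P ∧ Projective P ∧ Epi q := by
  obtain ⟨n, q, hq⟩ := Module.Finite.exists_fin' Γ M
  let e : Shrink.{v} (Fin n → Γ) ≃ₗ[Γ] (Fin n → Γ) := Shrink.linearEquiv Γ _
  refine ⟨ModuleCat.of Γ (Shrink.{v} (Fin n → Γ)), ModuleCat.ofHom (q ∘ₗ e.toLinearMap),
    Module.Finite.equiv e.symm, ?_, (ModuleCat.epi_iff_surjective _).mpr (hq.comp e.surjective)⟩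
  have : Module.Projective Γ (Shrink.{v} (Fin n → Γ)) := .of_equiv e.symm
  infer_instance

namespace IsResolving

universe v

variable {Γ : Type} [Ring Γ] {𝒳 : Set (ModuleCat.{v} Γ)}

theorem isClosedUnderExtensions (h𝒳 : IsResolving Γ 𝒳) :
    ObjectProperty.IsClosedUnderExtensions (· ∈ 𝒳) :=
  ⟨h𝒳.ext_closed _⟩

theorem isStableUnderRetracts (h𝒳 : IsResolving Γ 𝒳) :
    ObjectProperty.IsStableUnderRetracts (· ∈ 𝒳) where
  of_retract {N X} ρ hX := by
    obtain ⟨K, e⟩ := nonempty_iso_biprod_of_retract ρ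
    exact h𝒳.summand_closed N K (h𝒳.iso_closed X _ e hX)

theorem mem_of_isZero (h𝒳 : IsResolving Γ 𝒳) {M : ModuleCat.{v} Γ} (hM : IsZero M) : M ∈ 𝒳 := by
  have : Subsingleton M := ModuleCat.subsingleton_of_isZero hM
  exact h𝒳.proj_mem M (inferInstanceAs (Module.Finite Γ M)) hM.projective

theorem exists_shortExact_projective (h𝒳 : IsResolving Γ 𝒳) {X : ModuleCat.{v} Γ} (hX : X ∈ 𝒳) :
    ∃ (K P : ModuleCat.{v} Γ) (i : K ⟶ P) (q : P ⟶ X) (w : i ≫ q = 0),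
      (ShortComplex.mk i q w).ShortExact ∧ Projective P ∧ K ∈ 𝒳 := by
  have : Module.Finite Γ X := h𝒳.subset_fg hX
  obtain ⟨P, q, hPfin, hP, hq⟩ := exists_finite_projective_epi X
  have hK : (ShortComplex.mk (kernel.ι q) q (kernel.condition q)).ShortExact :=
    .mk' (ShortComplex.exact_kernel q) (inferInstanceAs (Mono (kernel.ι q))) hq
  exact ⟨_, P, _, q, _, hK, hP, h𝒳.ker_epi_closed _ hK (h𝒳.proj_mem P hPfin hP) hX⟩

theorem exists_isRightApprox_of_shortExact [IsArtinianRing Γ] (h𝒳 : IsResolving Γ 𝒳)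
    {S : ShortComplex (ModuleCat.{v} Γ)} (hS : S.ShortExact)
    (h₁ : ∃ (X : ModuleCat.{v} Γ) (f : X ⟶ S.X₁), IsRightApprox 𝒳 f)
    (h₃ : ∃ (X : ModuleCat.{v} Γ) (f : X ⟶ S.X₃), IsRightApprox 𝒳 f) :
    ∃ (X : ModuleCat.{v} Γ) (f : X ⟶ S.X₂), IsRightApprox 𝒳 f := by
  obtain ⟨X₁, f₁, hf₁⟩ := h₁
  obtain ⟨X₃, c, hc⟩ := h₃
  have : Module.Finite Γ X₁ := h𝒳.subset_fg hf₁.1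
  obtain ⟨A, f, hf, hmin⟩ := hf₁.exists_isRightMinimal h𝒳.isStableUnderRetracts
  obtain ⟨K, P, i, q, w, hQ, hP, hK⟩ := h𝒳.exists_shortExact_projective hc.1
  have : Projective (ShortComplex.mk i q w).X₂ := hP
  exact _root_.exists_isRightApprox_of_shortExact h𝒳.isClosedUnderExtensions hQ hK hS hf hmin hc

end IsResolving

theorem resolving_contravariantlyFinite_in_filt_iff_general
    (Γ : Type) [Ring Γ] [IsArtinianRing Γ] (𝒮 : Set (ModuleCat Γ))
    (𝒳 : Set (ModuleCat Γ)) (h𝒳 : IsResolving Γ 𝒳) :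
    ContravariantlyFiniteIn 𝒳 {M | Filt Γ 𝒮 M} ↔
      ∀ S ∈ 𝒮, ∃ (X : ModuleCat Γ) (f : X ⟶ S), IsRightApprox 𝒳 f := by
  refine ⟨fun h S hS => h S (.of hS), fun h M (hM : Filt Γ 𝒮 M) => ?_⟩
  induction hM with
  | of hM => exact h _ hM
  | zero hM => exact ⟨_, 𝟙 _, isRightApprox_id (h𝒳.mem_of_isZero hM)⟩
  | ext _ hS _ _ ih₁ ih₃ => exact h𝒳.exists_isRightApprox_of_shortExact hS ih₁ ih₃

/-- Let `Γ` be an artin algebra, `𝒮` a set of finitely generated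
`Γ`-modules, and `𝒳` a resolving subcategory contained in `filt(𝒮)`. Then `𝒳` is
contravariantly finite in `filt(𝒮)` if and only if every `S ∈ 𝒮` has a right
`𝒳`-approximation. -/
theorem resolving_contravariantlyFinite_in_filt_iff
    (R : Type) [CommRing R] [IsArtinianRing R]
    (Γ : Type) [Ring Γ] [Algebra R Γ] [Module.Finite R Γ]
    (𝒮 : Set (ModuleCat Γ)) (h𝒮 : 𝒮 ⊆ fgMod Γ)
    (𝒳 : Set (ModuleCat Γ)) (h𝒳 : IsResolving Γ 𝒳)
    (h𝒳filt : 𝒳 ⊆ {M | Filt Γ 𝒮 M}) :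
    ContravariantlyFiniteIn 𝒳 {M | Filt Γ 𝒮 M} ↔
      ∀ S ∈ 𝒮, ∃ (X : ModuleCat Γ) (f : X ⟶ S), IsRightApprox 𝒳 f :=
  haveI := IsArtinianRing.of_finite R Γ
  resolving_contravariantlyFinite_in_filt_iff_general Γ 𝒮 𝒳 h𝒳
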